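/- arXiv:2507.03146 — 4 statements merged into one kernel-verified Lean document; each statement's English description precedes it below -/
import Mathlib

section
/- Let 𝒳 be a measurable space, 𝒴 a finite nonempty set, and let 𝓔 be a measurable space of domains, where each domain e carries a probability measure P_e on 𝒳 × 𝒴. Let H be a class of set-valued predictors, L a loss function assigning to each pair (h, e) with h ∈ H a real number, and γ ∈ (0,1); assume each map e ↦ 𝟙_{L,γ}(h,e) is measurable. If H has the uniform convergence property with respect to L and γ (i.e., for every δ, ε ∈ (0,1) there exists an integer m(δ,ε) such that for every probability measure D on 𝓔 and every i.i.d. sample S of at least m(δ,ε) domains drawn from D, with probability at least 1−δ over S, every h ∈ H satisfies |E_{e∼D}[𝟙_{L,γ}(h,e)] − (1/|S|)Σ_{e∈S} 𝟙_{L,γ}(h,e)| ≤ ε), then the VC dimension VCdim_{L,γ}(H) is finite. -/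
open MeasureTheory Set

/-!
If `C` is shattered and a sample consists of `k` points of `C`, some hypothesis equals `1` on the
sample and `0` on the rest of `C`. Its empirical mean is `1`, while its mean under the uniform
distribution on `C` is at most `k / |C|`. So if even one such sample is `ε`-representative for this
distribution, then `1 - k / |C| ≤ ε`, which bounds `|C|`.
-/

section VCDimension

variable {ℰ H : Type*}

/-- `Shatters F C`: every subset of `C` is cut out, within `C`, by a member of the family `F` of
indicator functions. The family takes real values so that its members can be averaged. -/
def Shatters (F : H → ℰ → ℝ) (C : Finset ℰ) : Prop :=
  ∀ C' ⊆ C, ∃ h, (∀ e ∈ C', F h e = 1) ∧ ∀ e ∈ C, e ∉ C' → F h e = 0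

/-- `IsRepresentative F D ε S`: the sample `S` is `ε`-representative for the family `F` and the
distribution `D`, that is, empirical means over `S` are uniformly `ε`-close to means under `D`. -/
def IsRepresentative [MeasurableSpace ℰ] (F : H → ℰ → ℝ) (D : Measure ℰ) (ε : ℝ) {k : ℕ}
    (S : Fin k → ℰ) : Prop :=
  ∀ h, |(∫ e, F h e ∂D) - (1 / (k : ℝ)) * ∑ i, F h (S i)| ≤ ε

section Shatters

variable {F : H → ℰ → ℝ} {C : Finset ℰ}

theorem Shatters.exists_finite_subfamily (hC : Shatters F C) :
    ∃ T : Set H, T.Finite ∧ Shatters (fun h : T ↦ F h) C := by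
  choose cut hone hzero using hC
  let cutOf (C' : C.powerset) : H := cut C' (Finset.mem_powerset.mp C'.2)
  refine ⟨range cutOf, finite_range cutOf, fun C' hC' ↦ ?_⟩
  exact ⟨⟨cut C' hC', ⟨C', Finset.mem_powerset.mpr hC'⟩, rfl⟩, hone C' hC', hzero C' hC'⟩

theorem Shatters.exists_sum_eq_card (hC : Shatters F C) {C' : Finset ℰ} (hC' : C' ⊆ C) :
    ∃ h, (∀ e ∈ C', F h e = 1) ∧ ∑ e ∈ C, F h e = C'.card := by
  obtain ⟨h, hone, hzero⟩ := hC C' hC'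
  refine ⟨h, hone, ?_⟩
  rw [← Finset.sum_subset hC' hzero, Finset.sum_congr rfl hone, Finset.sum_const, nsmul_one]

theorem Shatters.exists_eq_one_on_sample (hC : Shatters F C) {k : ℕ} (s : Fin k → C) :
    ∃ h, (∀ i, F h (s i) = 1) ∧ ∑ e ∈ C, F h e ≤ k := by
  classical
  let sampled : Finset ℰ := Finset.univ.image fun i ↦ (s i : ℰ)
  have sampled_subset : sampled ⊆ C := Finset.image_subset_iff.mpr fun i _ ↦ (s i).2
  have card_sampled_le : sampled.card ≤ k := Finset.card_image_le.trans_eq (Finset.card_fin k)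
  obtain ⟨h, hone, hsum⟩ := hC.exists_sum_eq_card sampled_subset
  refine ⟨h, fun i ↦ hone _ (Finset.mem_image_of_mem _ (Finset.mem_univ i)), ?_⟩
  exact hsum.trans_le (Nat.cast_le.mpr card_sampled_le)

end Shatters

theorem integral_map_uniformOfFintype {α : Type*} [Fintype α] [Nonempty α] [MeasurableSpace α]
    [DiscreteMeasurableSpace α] [MeasurableSpace ℰ] (f : α → ℰ) {g : ℰ → ℝ} (hg : Measurable g) :
    ∫ e, g e ∂(PMF.uniformOfFintype α).toMeasure.map f = (∑ a, g (f a)) / Fintype.card α := by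
  rw [integral_map Measurable.of_discrete.aemeasurable hg.aestronglyMeasurable, PMF.integral_eq_sum]
  simp only [PMF.uniformOfFintype_apply, ENNReal.toReal_inv, ENNReal.toReal_natCast, smul_eq_mul,
    inv_mul_eq_div, Finset.sum_div]

theorem exists_mem_of_pi_map_ne_zero {ι : Type*} [Fintype ι] {X Y : ι → Type*}
    [∀ i, MeasurableSpace (X i)] [∀ i, MeasurableSpace (Y i)] {μ : ∀ i, Measure (X i)}
    {f : ∀ i, X i → Y i} [∀ i, SigmaFinite ((μ i).map (f i))] (hf : ∀ i, Measurable (f i))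
    {A : Set (∀ i, Y i)} (hA : MeasurableSet A)
    (hpos : Measure.pi (fun i ↦ (μ i).map (f i)) A ≠ 0) :
    ∃ x : ∀ i, X i, (fun i ↦ f i (x i)) ∈ A := by
  have measurable_prod : Measurable fun (x : ∀ i, X i) i ↦ f i (x i) :=
    measurable_pi_lambda _ fun i ↦ (hf i).comp (measurable_pi_apply i)
  rw [← Measure.pi_map_pi fun i ↦ (hf i).aemeasurable, Measure.map_apply measurable_prod hA] at hpos
  exact nonempty_of_measure_ne_zero hpos

section IsRepresentative

variable [MeasurableSpace ℰ] {F : H → ℰ → ℝ} {ε : ℝ} {k : ℕ}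

theorem measurableSet_isRepresentative [Countable H] (hF : ∀ h, Measurable (F h)) (D : Measure ℰ) :
    MeasurableSet {S : Fin k → ℰ | IsRepresentative F D ε S} := by
  refine measurableSet_setOfPred.mpr (Measurable.forall fun h ↦ ?_)
  refine measurableSet_setOfPred.mp (measurableSet_le ?_ measurable_const)
  have measurable_sum : Measurable fun S : Fin k → ℰ ↦ ∑ i, F h (S i) :=
    Finset.measurable_fun_sum _ fun i _ ↦ (hF h).comp (measurable_pi_apply i)
  exact (measurable_const.sub (measurable_sum.const_mul _)).abs

theorem exists_sample_abs_mean_sub_le [Countable H] (hF : ∀ h, Measurable (F h))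
    (hrep : ∀ D : Measure ℰ, IsProbabilityMeasure D →
      (Measure.pi fun _ : Fin k ↦ D) {S | IsRepresentative F D ε S} ≠ 0)
    {α : Type*} [Fintype α] [Nonempty α] (f : α → ℰ) :
    ∃ s : Fin k → α, ∀ h,
      |(∑ a, F h (f a)) / Fintype.card α - (1 / (k : ℝ)) * ∑ i, F h (f (s i))| ≤ ε := by
  let _ : MeasurableSpace α := ⊤
  let D : Measure ℰ := (PMF.uniformOfFintype α).toMeasure.map f
  have hD : IsProbabilityMeasure D :=
    Measure.isProbabilityMeasure_map Measurable.of_discrete.aemeasurable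
  obtain ⟨s, hs⟩ := exists_mem_of_pi_map_ne_zero (fun _ ↦ Measurable.of_discrete)
    (measurableSet_isRepresentative hF D) (hrep D hD)
  refine ⟨s, fun h ↦ ?_⟩
  rw [← integral_map_uniformOfFintype f (hF h)]
  exact hs h

theorem Shatters.one_sub_mul_card_le {C : Finset ℰ} (hC : Shatters F C)
    (hF : ∀ h, Measurable (F h)) (hk : k ≠ 0)
    (hrep : ∀ D : Measure ℰ, IsProbabilityMeasure D →
      (Measure.pi fun _ : Fin k ↦ D) {S | IsRepresentative F D ε S} ≠ 0) :
    (1 - ε) * C.card ≤ k := by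
  obtain rfl | hne := C.eq_empty_or_nonempty
  · simp
  have : Nonempty C := hne.to_subtype
  -- Over all of `H` the representative samples need not form a measurable set.
  obtain ⟨T, hT, hCT⟩ := hC.exists_finite_subfamily
  have : Finite T := hT
  have restrict_subset (D : Measure ℰ) : {S : Fin k → ℰ | IsRepresentative F D ε S} ⊆
      {S | IsRepresentative (fun h : T ↦ F h) D ε S} := fun _ hS h ↦ hS h
  obtain ⟨s, hs⟩ := exists_sample_abs_mean_sub_le (fun h : T ↦ hF h)
    (fun D hD hzero ↦ hrep D hD (measure_mono_null (restrict_subset D) hzero))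
    (Subtype.val : C → ℰ)
  obtain ⟨h, hone, hsum⟩ := hCT.exists_eq_one_on_sample s
  have empirical_mean : 1 / (k : ℝ) * ∑ i, F h (s i) = 1 := by
    simp [hone, hk]
  have gap := (abs_le.mp (hs h)).1
  rw [empirical_mean, Finset.sum_coe_sort C (F h), Fintype.card_coe] at gap
  have card_pos : (0 : ℝ) < C.card := Nat.cast_pos.mpr hne.card_pos
  calc (1 - ε) * C.card ≤ (∑ e ∈ C, F h e) / C.card * C.card := by gcongr; linarith
    _ = ∑ e ∈ C, F h e := div_mul_cancel₀ _ card_pos.ne'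
    _ ≤ k := hsum

theorem uniformConvergence_implies_finite_VCdim_general (hF : ∀ h, Measurable (F h)) (hε : ε < 1)
    (hk : k ≠ 0)
    (hrep : ∀ D : Measure ℰ, IsProbabilityMeasure D →
      (Measure.pi fun _ : Fin k ↦ D) {S | IsRepresentative F D ε S} ≠ 0) :
    ∃ M : ℕ, ∀ C : Finset ℰ, Shatters F C → C.card ≤ M := by
  refine ⟨⌊k / (1 - ε)⌋₊, fun C hC ↦ Nat.le_floor ?_⟩
  rw [le_div_iff₀' (sub_pos.mpr hε)]
  exact hC.one_sub_mul_card_le hF hk hrep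

end IsRepresentative

end VCDimension

/-- If a hypothesis class `H` of set-valued predictors has the uniform
convergence property with respect to a loss `L` and threshold `γ` (in the multi-domain sense),
then its VC dimension with respect to `L, γ` is finite, i.e. there is a finite bound on the
cardinality of any set of domains shattered by `H`. -/
theorem uniformConvergence_implies_finite_VCdim
    {𝒳 : Type*} [MeasurableSpace 𝒳]
    {𝒴 : Type*} [Fintype 𝒴] [Nonempty 𝒴] [MeasurableSpace 𝒴]
    {ℰ : Type*} [MeasurableSpace ℰ]
    (P : ℰ → Measure (𝒳 × 𝒴)) (hP : ∀ e, IsProbabilityMeasure (P e))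
    {H : Type*} (hyp : H → 𝒳 → Set 𝒴)
    (L : (𝒳 → Set 𝒴) → Measure (𝒳 × 𝒴) → ℝ)
    (γ : ℝ) (hγ : γ ∈ Set.Ioo (0 : ℝ) 1)
    -- the performance indicator 𝟙_{L,γ}(h,e)
    (ind : H → ℰ → ℝ)
    (hind : ∀ h e, ind h e = if γ ≤ L (hyp h) (P e) then 1 else 0)
    -- measurability of the performance indicator in the domain
    (hmeas : ∀ h : H, Measurable fun e => ind h e)
    -- uniform convergence property of `H` with respect to `L`, `γ`
    (hUC : ∀ δ ε : ℝ, δ ∈ Set.Ioo (0 : ℝ) 1 → ε ∈ Set.Ioo (0 : ℝ) 1 →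
      ∃ m : ℕ, ∀ D : Measure ℰ, IsProbabilityMeasure D →
        ∀ k : ℕ, m ≤ k →
          ENNReal.ofReal (1 - δ) ≤
            (Measure.pi fun _ : Fin k => D)
              {S : Fin k → ℰ | ∀ h : H,
                abs ((∫ e, ind h e ∂D) - (1 / (k : ℝ)) * ∑ i, ind h (S i)) ≤ ε}) :
    -- conclusion: the VC dimension is finite
    ∃ M : ℕ, ∀ C : Finset ℰ,
      (∀ C' : Finset ℰ, C' ⊆ C → ∃ h : H,
        (∀ e ∈ C', ind h e = 1) ∧ (∀ e ∈ C, e ∉ C' → ind h e = 0)) →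
      C.card ≤ M := by
  obtain ⟨m, hm⟩ := hUC (1 / 2) (1 / 2) (by norm_num) (by norm_num)
  exact uniformConvergence_implies_finite_VCdim_general hmeas one_half_lt_one m.succ_ne_zero
    fun D hD ↦ (lt_of_lt_of_le (by norm_num) (hm D hD (m + 1) m.le_succ)).ne'
end

section
/- Let 𝒴 be a finite nonempty set and let 𝒳 = ℝ. Let H be the class of linear set-valued predictors on ℝ: for each h ∈ H and each y ∈ 𝒴 there are w_y, b_y ∈ ℝ with h_y(x) = 𝟙[w_y·x + b_y ≥ 0] and h(x) = {y : h_y(x) = 1}. Then for every γ ∈ (0,1), H cannot shatter, with respect to the recall loss L_recall and threshold γ, any set of more than 2|𝒴| domains (probability measures on ℝ × 𝒴 giving positive mass to each label); in particular VCdim_{L_recall,γ}(H) ≤ 2|𝒴|. -/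
open MeasureTheory Set ProbabilityTheory
open scoped ENNReal

/-- The recall loss `L_recall(h, P) = max_{y ∈ 𝒴} P(y ∉ h(X) | Y = y)` of a set-valued
predictor `h : 𝒳 → 𝒫(𝒴)` on a domain `P`. -/
noncomputable def recallLoss {𝒳 𝒴 : Type*} [MeasurableSpace 𝒳] [MeasurableSpace 𝒴]
    [Fintype 𝒴] [Nonempty 𝒴] (h : 𝒳 → Set 𝒴) (P : Measure (𝒳 × 𝒴)) : ℝ :=
  Finset.univ.sup' Finset.univ_nonempty fun y : 𝒴 =>
    ((P[|{p : 𝒳 × 𝒴 | p.2 = y}]) {p : 𝒳 × 𝒴 | y ∉ h p.1}).toReal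

/-!
Fix a finite set `C` of domains. A domain has recall loss at least `γ` exactly when, for some label
`y`, the region where `y` is missed has conditional mass at least `γ`, and enlarging a region only
enlarges the set of domains that give it such mass. Hence if the missed regions of each label lie in
`n` chains, then so do the sets of domains that fail because of that label. A chain of finite sets
has an element common to all its nonempty members, so `n * |𝒴|` domains suffice to meet every
nonempty set of failing domains: no predictor fails exactly on the remaining domains of `C`, if
there are any.
On `ℝ` the missed regions are rays, and rays form two chains.
-/

section Transversal

variable {α ι : Type*}

theorem exists_forall_mem_of_isChain [Nonempty α] {𝒜 : Set (Finset α)}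
    (h𝒜 : IsChain (· ⊆ ·) 𝒜) : ∃ a, ∀ s ∈ 𝒜, s.Nonempty → a ∈ s := by
  by_cases hne : ∃ s, s ∈ 𝒜 ∧ s.Nonempty
  · obtain ⟨m, ⟨hm, a, ha⟩, hmin⟩ := exists_minimal_of_wellFoundedLT _ hne
    exact ⟨a, fun s hs hs' => (h𝒜.total hm hs).elim (· ha) fun hsm => hmin ⟨hs, hs'⟩ hsm ha⟩
  · exact ⟨Classical.arbitrary α, fun s hs hs' => (hne ⟨s, hs, hs'⟩).elim⟩

theorem exists_transversal_of_isChain [Fintype ι] {𝒜 : ι → Set (Finset α)}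
    (h𝒜 : ∀ i, IsChain (· ⊆ ·) (𝒜 i)) :
    ∃ T : Finset α, T.card ≤ Fintype.card ι ∧
      ∀ i, ∀ s ∈ 𝒜 i, s.Nonempty → ∃ a ∈ T, a ∈ s := by
  classical
  rcases isEmpty_or_nonempty α with _ | _
  · exact ⟨∅, by simp, fun _ _ _ ⟨a, _⟩ => isEmptyElim a⟩
  · choose a ha using fun i => exists_forall_mem_of_isChain (h𝒜 i)
    exact ⟨Finset.univ.image a, Finset.card_image_le, fun i s hs hs' =>
      ⟨a i, Finset.mem_image_of_mem a (Finset.mem_univ i), ha i s hs hs'⟩⟩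

end Transversal

section Domains

variable {𝒳 𝒴 : Type*} [MeasurableSpace 𝒳] [MeasurableSpace 𝒴]

/-- A domain: a probability measure on `𝒳 × 𝒴` under which every label has positive probability. -/
structure IsLabelledDomain (P : Measure (𝒳 × 𝒴)) : Prop where
  isProbabilityMeasure : IsProbabilityMeasure P
  label_pos : ∀ y : 𝒴, 0 < P {p : 𝒳 × 𝒴 | p.2 = y}

/-- The class `H` shatters the finite set `C` of domains with respect to the loss `L` and the
threshold `γ`. The performance indicator `𝟙_{L,γ}(h, P)` is expressed by `γ ≤ L h P`. -/
structure ShattersDomains (H : Set (𝒳 → Set 𝒴)) (L : (𝒳 → Set 𝒴) → Measure (𝒳 × 𝒴) → ℝ)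
    (γ : ℝ) (C : Finset (Measure (𝒳 × 𝒴))) : Prop where
  isLabelledDomain : ∀ P ∈ C, IsLabelledDomain P
  exists_predictor : ∀ C' ⊆ C, ∃ h ∈ H, (∀ P ∈ C', γ ≤ L h P) ∧ ∀ P ∈ C, P ∉ C' → L h P < γ

/-- The conditional probability `P(X ∈ A | Y = y)`. -/
noncomputable def labelCondProb (P : Measure (𝒳 × 𝒴)) (y : 𝒴) (A : Set 𝒳) : ℝ :=
  (P[|{p : 𝒳 × 𝒴 | p.2 = y}]).real {p | p.1 ∈ A}

theorem labelCondProb_mono (P : Measure (𝒳 × 𝒴)) (y : 𝒴) : Monotone (labelCondProb P y) :=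
  fun _ _ hAB => measureReal_mono fun _ hp => hAB hp

theorem le_recallLoss_iff [Fintype 𝒴] [Nonempty 𝒴] {γ : ℝ} {h : 𝒳 → Set 𝒴}
    {P : Measure (𝒳 × 𝒴)} :
    γ ≤ recallLoss h P ↔ ∃ y, γ ≤ labelCondProb P y {x | y ∉ h x} := by
  simp [recallLoss, labelCondProb, Measure.real]

open Classical in
/-- The domains in `C` that fail at threshold `γ` because of the label `y`, for a predictor that
misses `y` exactly on `A`. -/
noncomputable def failingDomains (C : Finset (Measure (𝒳 × 𝒴))) (γ : ℝ) (y : 𝒴) (A : Set 𝒳) :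
    Finset (Measure (𝒳 × 𝒴)) :=
  {P ∈ C | γ ≤ labelCondProb P y A}

theorem mem_failingDomains {C : Finset (Measure (𝒳 × 𝒴))} {γ : ℝ} {y : 𝒴} {A : Set 𝒳}
    {P : Measure (𝒳 × 𝒴)} :
    P ∈ failingDomains C γ y A ↔ P ∈ C ∧ γ ≤ labelCondProb P y A := by
  simp [failingDomains]

theorem failingDomains_mono (C : Finset (Measure (𝒳 × 𝒴))) (γ : ℝ) (y : 𝒴) :
    Monotone (failingDomains C γ y) := fun _ _ hAB P hP =>
  have ⟨hPC, hγ⟩ := mem_failingDomains.1 hP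
  mem_failingDomains.2 ⟨hPC, hγ.trans (labelCondProb_mono P y hAB)⟩

theorem ShattersDomains.card_le_of_isChain [Fintype 𝒴] [Nonempty 𝒴] {ι : Type*} [Fintype ι]
    {H : Set (𝒳 → Set 𝒴)} {γ : ℝ} {C : Finset (Measure (𝒳 × 𝒴))}
    (hC : ShattersDomains H recallLoss γ C) {𝒦 : 𝒴 → ι → Set (Set 𝒳)}
    (h𝒦 : ∀ y i, IsChain (· ⊆ ·) (𝒦 y i))
    (hH : ∀ h ∈ H, ∀ y, ∃ i, {x | y ∉ h x} ∈ 𝒦 y i) :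
    C.card ≤ Fintype.card ι * Fintype.card 𝒴 := by
  classical
  obtain ⟨T, hTcard, hT⟩ := exists_transversal_of_isChain
    (𝒜 := fun k : ι × 𝒴 => failingDomains C γ k.2 '' 𝒦 k.2 k.1)
    fun k => (failingDomains_mono C γ k.2).isChain_image (h𝒦 k.2 k.1)
  obtain ⟨h, hh, hfail, hsucceed⟩ := hC.exists_predictor (C \ T) Finset.sdiff_subset
  have hCT : C ⊆ T := by
    intro Q hQC
    by_contra hQT
    obtain ⟨y, hy⟩ := le_recallLoss_iff.1 (hfail Q (Finset.mem_sdiff.2 ⟨hQC, hQT⟩))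
    obtain ⟨i, hi⟩ := hH h hh y
    obtain ⟨P, hPT, hP⟩ :=
      hT (i, y) _ (mem_image_of_mem _ hi) ⟨Q, mem_failingDomains.2 ⟨hQC, hy⟩⟩
    obtain ⟨hPC, hPy⟩ := mem_failingDomains.1 hP
    exact (hsucceed P hPC fun hPCT => (Finset.mem_sdiff.1 hPCT).2 hPT).not_ge
      (le_recallLoss_iff.2 ⟨y, hPy⟩)
  calc C.card ≤ T.card := Finset.card_le_card hCT
    _ ≤ Fintype.card (ι × 𝒴) := hTcard
    _ = Fintype.card ι * Fintype.card 𝒴 := Fintype.card_prod ι 𝒴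

theorem linear_one_dim_cannot_shatter_general [LinearOrder 𝒳] [Fintype 𝒴] [Nonempty 𝒴]
    {H : Set (𝒳 → Set 𝒴)} (hH : ∀ h ∈ H, ∀ y, IsUpperSet {x | y ∉ h x} ∨ IsLowerSet {x | y ∉ h x})
    {γ : ℝ} {C : Finset (Measure (𝒳 × 𝒴))} (hC : ShattersDomains H recallLoss γ C) :
    C.card ≤ 2 * Fintype.card 𝒴 :=
  hC.card_le_of_isChain (𝒦 := fun _ => ![{A | IsUpperSet A}, {A | IsLowerSet A}])
    (fun _ => Fin.forall_fin_two.2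
      ⟨fun _ hA _ hB _ => hA.total hB, fun _ hA _ hB _ => hA.total hB⟩)
    fun h hh y => Fin.exists_fin_two.2 (hH h hh y)

end Domains

theorem isUpperSet_or_isLowerSet_setOf_not_nonneg_affine {R : Type*} [Ring R] [LinearOrder R]
    [IsOrderedRing R] (w b : R) :
    IsUpperSet {x | ¬ 0 ≤ w * x + b} ∨ IsLowerSet {x | ¬ 0 ≤ w * x + b} := by
  rcases le_total w 0 with hw | hw
  · have hanti : Antitone fun x => w * x + b := (antitone_mul_left hw).add_const b
    exact .inl fun _ _ hxy hx hy => hx (hy.trans (hanti hxy))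
  · have hmono : Monotone fun x => w * x + b := (monotone_mul_left_of_nonneg hw).add_const b
    exact .inr fun _ _ hyx hx hy => hx (hy.trans (hmono hyx))

/-- The class of linear set-valued predictors on `ℝ`, parametrised by the slopes and intercepts of
the scores. -/
def linearPredictors (𝒴 : Type*) : Set (ℝ → Set 𝒴) :=
  range fun q : (𝒴 → ℝ) × (𝒴 → ℝ) => fun x => {y | 0 ≤ q.1 y * x + q.2 y}

theorem isUpperSet_or_isLowerSet_of_mem_linearPredictors {𝒴 : Type*} {h : ℝ → Set 𝒴}
    (hh : h ∈ linearPredictors 𝒴) (y : 𝒴) :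
    IsUpperSet {x | y ∉ h x} ∨ IsLowerSet {x | y ∉ h x} := by
  obtain ⟨⟨w, b⟩, rfl⟩ := hh
  exact isUpperSet_or_isLowerSet_setOf_not_nonneg_affine (w y) (b y)

/-- On `𝒳 = ℝ`, the class of linear set-valued predictors
(`h_y(x) = 𝟙[w_y x + b_y ≥ 0]`) cannot shatter more than `2|𝒴|` domains with respect to the
recall loss and any threshold `γ ∈ (0,1)`; in particular its VC dimension is at most `2|𝒴|`. -/
theorem linear_one_dim_cannot_shatter
    {𝒴 : Type*} [Fintype 𝒴] [Nonempty 𝒴] [MeasurableSpace 𝒴]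
    (γ : ℝ) (hγ : γ ∈ Set.Ioo (0 : ℝ) 1)
    (C : Finset (Measure (ℝ × 𝒴)))
    (hprob : ∀ P ∈ C, IsProbabilityMeasure P)
    (hpos : ∀ P ∈ C, ∀ y : 𝒴, 0 < P {p : ℝ × 𝒴 | p.2 = y})
    -- if the linear class shatters `C` w.r.t. `L_recall`, `γ` ...
    (hshat : ∀ C' : Finset (Measure (ℝ × 𝒴)), C' ⊆ C →
      ∃ w b : 𝒴 → ℝ,
        (∀ P ∈ C', γ ≤ recallLoss (fun x : ℝ => {y : 𝒴 | 0 ≤ w y * x + b y}) P) ∧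
        (∀ P ∈ C, P ∉ C' →
          recallLoss (fun x : ℝ => {y : 𝒴 | 0 ≤ w y * x + b y}) P < γ)) :
    -- ... then `C` has at most `2|𝒴|` elements
    C.card ≤ 2 * Fintype.card 𝒴 :=
  linear_one_dim_cannot_shatter_general
    (fun _ hh => isUpperSet_or_isLowerSet_of_mem_linearPredictors hh)
    ⟨fun P hP => ⟨hprob P hP, hpos P hP⟩, fun C' hC' =>
      have ⟨w, b, hwb⟩ := hshat C' hC'
      ⟨_, mem_range_self (w, b), hwb⟩⟩
end

section
/- Let 𝒴 be a finite nonempty set, let d ≥ 2, and let 𝒳 = ℝ^d. Let H be the class of linear set-valued predictors: for each h ∈ H and y ∈ 𝒴 there are w_y ∈ ℝ^d and b_y ∈ ℝ with h_y(x) = 𝟙[⟨w_y, x⟩ + b_y ≥ 0] and h(x) = {y : h_y(x) = 1}. Then for every γ ∈ (0,1) and every m ∈ ℕ there exists a set of m domains (probability measures on ℝ^d × 𝒴 giving positive mass to each label) that is shattered by H with respect to L_recall and γ; in particular VCdim_{L_recall,γ}(H) = ∞. -/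
open MeasureTheory Set ProbabilityTheory Matrix
open scoped ENNReal

/-!
The closed half planes `x / t + t * y ≤ 2`, `t > 0`, are bounded by the tangents to the branch
`x * y = 1`, `x > 0`: each contains the origin and meets the branch only in `(t, 1 / t)`, so it
misses `(1, 1)` when `t > 1`. To every subset `S` of the index set of the domains attach its own
such point `z S`, and let all labels use the half plane that keeps `z S`. The marginal of domain
`i` on the feature space puts mass `1 - γ` on the origin and spreads mass `γ` evenly over all `T`,
on `(1, 1)` if `i ∈ T` and on `z T` otherwise. The half plane of `S` misses mass exactly `γ` if
`i ∈ S`; otherwise it keeps the atom at `z S` and misses less than `γ`. Making the label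
independent of the features turns the missed mass into the recall loss.
-/

open scoped unitInterval

section Shattering

variable {𝓗 𝓓 ι : Type*} {L : 𝓗 → 𝓓 → ℝ} {γ : ℝ} {P : ι → 𝓓}

/-- The family `P` of domains is shattered by the predictors in `𝓗` with respect to the loss `L`
and the threshold `γ`: every subset of the index set is the set of indices where the performance
indicator of some predictor equals `1`. -/
def ShattersFamily (L : 𝓗 → 𝓓 → ℝ) (γ : ℝ) (P : ι → 𝓓) : Prop :=
  ∀ S : Set ι, ∃ h : 𝓗, ∀ i, γ ≤ L h (P i) ↔ i ∈ S

lemma ShattersFamily.injective (hP : ShattersFamily L γ P) : Function.Injective P := by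
  intro i j hij
  obtain ⟨h, hh⟩ := hP {j}
  exact (hh i).1 (hij ▸ (hh j).2 rfl)

end Shattering

section Marginals

variable {𝒳 : Type*} [MeasurableSpace 𝒳]

/-- The mixture `θ p + (1 - θ) δ_b` of a discrete distribution `p` with a point mass at `b`:
its mass on a set avoiding `b` reaches `θ` only if the set has full measure for `p`. -/
noncomputable def diracMixture (θ : I) (p : PMF 𝒳) (b : 𝒳) : Measure 𝒳 :=
  unitInterval.toNNReal θ • p.toMeasure + unitInterval.toNNReal (σ θ) • Measure.dirac b

instance (θ : I) (p : PMF 𝒳) (b : 𝒳) : IsProbabilityMeasure (diracMixture θ p b) := by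
  unfold diracMixture
  infer_instance

lemma diracMixture_real_apply_of_notMem (θ : I) (p : PMF 𝒳) {b : 𝒳} {N : Set 𝒳}
    (hN : MeasurableSet N) (hb : b ∉ N) :
    (diracMixture θ p b).real N = θ * p.toMeasure.real N := by
  have dirac_zero : (Measure.dirac b).real N = 0 := by
    rw [measureReal_def, Measure.dirac_apply' b hN, indicator_of_notMem hb, ENNReal.toReal_zero]
  rw [diracMixture, measureReal_add_apply, measureReal_nnreal_smul_apply,
    measureReal_nnreal_smul_apply, dirac_zero, mul_zero, add_zero, unitInterval.coe_toNNReal]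

lemma le_diracMixture_real_iff {θ : I} (hθ : 0 < θ) (p : PMF 𝒳) {b : 𝒳} {N : Set 𝒳}
    (hN : MeasurableSet N) (hb : b ∉ N) :
    (θ : ℝ) ≤ (diracMixture θ p b).real N ↔ p.support ⊆ N := by
  have hθ' : (0 : ℝ) < θ := hθ
  calc (θ : ℝ) ≤ (diracMixture θ p b).real N
      ↔ 1 ≤ p.toMeasure.real N := by
        rw [diracMixture_real_apply_of_notMem θ p hN hb, le_mul_iff_one_le_right hθ']
    _ ↔ p.toMeasure.real N = 1 := measureReal_le_one.ge_iff_eq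
    _ ↔ p.support ⊆ N := by
        rw [measureReal_def, ENNReal.toReal_eq_one_iff, p.toMeasure_apply_eq_one_iff hN]

lemma exists_marginals_of_isolated_points {ι : Type*} [Finite ι] {N : Set ι → Set 𝒳}
    {z : Set ι → 𝒳} {a b : 𝒳} (hN : ∀ S, MeasurableSet (N S)) (ha : ∀ S, a ∈ N S)
    (hb : ∀ S, b ∉ N S) (hz : ∀ S T, z T ∈ N S ↔ T ≠ S) {θ : I} (hθ : 0 < θ) :
    ∃ μ : ι → Measure 𝒳, (∀ i, IsProbabilityMeasure (μ i)) ∧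
      ∀ S i, (θ : ℝ) ≤ (μ i).real (N S) ↔ i ∈ S := by
  classical
  have := Fintype.ofFinite ι
  let atom (i : ι) (T : Set ι) : 𝒳 := if i ∈ T then a else z T
  have atom_mem (S : Set ι) (i : ι) : (∀ T, atom i T ∈ N S) ↔ i ∈ S := by
    refine ⟨fun h => ?_, fun hi T => ?_⟩
    · by_contra hi
      exact (hz S S).1 (by simpa only [atom, if_neg hi] using h S) rfl
    · by_cases hT : i ∈ T
      · simpa only [atom, if_pos hT] using ha S
      · simpa only [atom, if_neg hT] using (hz S T).2 fun hTS => hT (hTS ▸ hi)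
  refine ⟨fun i => diracMixture θ ((PMF.uniformOfFintype (Set ι)).map (atom i)) b,
    fun i => inferInstance, fun S i => ?_⟩
  rw [le_diracMixture_real_iff hθ _ (hN S) (hb S), ← atom_mem S i, PMF.support_map,
    PMF.support_uniformOfFintype, Set.top_eq_univ, Set.image_univ, Set.range_subset_iff]

end Marginals

section ProductDomains

variable {𝒳 𝒴 : Type*} [MeasurableSpace 𝒳] [MeasurableSpace 𝒴]

lemma cond_prod_snd_apply_fst (μ : Measure 𝒳) [IsProbabilityMeasure μ] (ν : Measure 𝒴)
    [IsFiniteMeasure ν] {s : Set 𝒳} (hs : MeasurableSet s) {t : Set 𝒴} (ht : ν t ≠ 0) :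
    (μ.prod ν)[Prod.fst ⁻¹' s | Prod.snd ⁻¹' t] = μ s := by
  rw [cond_apply' (measurable_fst hs), inter_comm, ← Set.prod_eq, ← Set.univ_prod,
    Measure.prod_prod, Measure.prod_prod, measure_univ, one_mul, mul_comm (μ s), ← mul_assoc,
    ENNReal.inv_mul_cancel ht (measure_ne_top ν t), one_mul]

lemma recallLoss_prod [Fintype 𝒴] [Nonempty 𝒴] (μ : Measure 𝒳) [IsProbabilityMeasure μ]
    {ν : Measure 𝒴} [IsFiniteMeasure ν] (hν : ∀ y, 0 < ν {y}) {h : 𝒳 → Set 𝒴}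
    (hh : ∀ y, MeasurableSet {x | y ∉ h x}) :
    recallLoss h (μ.prod ν) =
      Finset.univ.sup' Finset.univ_nonempty fun y => μ.real {x | y ∉ h x} :=
  Finset.sup'_congr _ rfl fun y _ =>
    congrArg ENNReal.toReal (cond_prod_snd_apply_fst μ ν (hh y) (hν y).ne')

lemma exists_isProbabilityMeasure_singleton_pos (𝒴 : Type*) [Finite 𝒴] [Nonempty 𝒴]
    [MeasurableSpace 𝒴] : ∃ ν : Measure 𝒴, IsProbabilityMeasure ν ∧ ∀ y, 0 < ν {y} := by
  have := Fintype.ofFinite 𝒴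
  let p := PMF.uniformOfFintype 𝒴
  refine ⟨p.toMeasure, inferInstance, fun y => ?_⟩
  calc 0 < p y := (p.apply_pos_iff y).2 (PMF.mem_support_uniformOfFintype y)
    _ = p.toOuterMeasure {y} := (p.toOuterMeasure_apply_singleton y).symm
    _ ≤ p.toMeasure {y} := p.toOuterMeasure_apply_le_toMeasure_apply {y}

end ProductDomains

section LinearPredictors

variable {ι 𝒴 : Type*} [Fintype ι]

/-- The linear set-valued predictor with weights `w` and biases `b`. -/
def linearPredictor (w : 𝒴 → ι → ℝ) (b : 𝒴 → ℝ) (x : ι → ℝ) : Set 𝒴 :=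
  {y | 0 ≤ w y ⬝ᵥ x + b y}

lemma measurableSet_dotProduct_add_neg (w : ι → ℝ) (b : ℝ) :
    MeasurableSet {x | w ⬝ᵥ x + b < 0} := by
  unfold dotProduct
  exact measurableSet_lt (by fun_prop) measurable_const

lemma recallLoss_linearPredictor_const_prod [Fintype 𝒴] [Nonempty 𝒴] [MeasurableSpace 𝒴]
    (μ : Measure (ι → ℝ)) [IsProbabilityMeasure μ] {ν : Measure 𝒴} [IsFiniteMeasure ν]
    (hν : ∀ y, 0 < ν {y}) (w : ι → ℝ) (b : ℝ) :
    recallLoss (linearPredictor (fun _ : 𝒴 => w) fun _ => b) (μ.prod ν) =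
      μ.real {x | w ⬝ᵥ x + b < 0} := by
  have missed (y : 𝒴) :
      {x | y ∉ linearPredictor (fun _ : 𝒴 => w) (fun _ => b) x} = {x | w ⬝ᵥ x + b < 0} := by
    simp only [linearPredictor, mem_ofPred_eq, not_le]
  rw [recallLoss_prod μ hν fun y => missed y ▸ measurableSet_dotProduct_add_neg w b]
  simp only [missed, Finset.sup'_const]

end LinearPredictors

section Hyperbola

variable {ι : Type*} [Fintype ι]

section Plane

variable [DecidableEq ι] {i j : ι}

/-- The point with `i`-th coordinate `x` and `j`-th coordinate `y`, all others being `0`, for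
`i ≠ j`: it embeds the plane in `ι → ℝ`. -/
def planePoint (i j : ι) (x y : ℝ) : ι → ℝ :=
  Pi.single i x + Pi.single j y

lemma planePoint_dotProduct (hij : i ≠ j) (x y x' y' : ℝ) :
    planePoint i j x y ⬝ᵥ planePoint i j x' y' = x * x' + y * y' := by
  simp [planePoint, dotProduct_add, hij, hij.symm]

lemma tangent_hyperbola_neg_iff (hij : i ≠ j) {s t : ℝ} (hs : 0 < s) (ht : 0 < t) :
    planePoint i j (-t⁻¹) (-t) ⬝ᵥ planePoint i j s s⁻¹ + 2 < 0 ↔ s ≠ t := by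
  have tangency : -t⁻¹ * s + -t * s⁻¹ + 2 = -((s - t) ^ 2 / (s * t)) := by
    field_simp
    ring
  rw [planePoint_dotProduct hij, tangency, neg_lt_zero,
    div_pos_iff_of_pos_right (mul_pos hs ht), sq_pos_iff, sub_ne_zero]

end Plane

lemma exists_halfspaces_isolating_points {κ : Type*} [Nontrivial ι] [Countable κ] :
    ∃ (w : κ → ι → ℝ) (β : ℝ) (z : κ → ι → ℝ) (a b : ι → ℝ),
      (∀ k, w k ⬝ᵥ a + β < 0) ∧ (∀ k, 0 ≤ w k ⬝ᵥ b + β) ∧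
      ∀ k l, w k ⬝ᵥ z l + β < 0 ↔ l ≠ k := by
  classical
  obtain ⟨i, j, hij⟩ := exists_pair_ne ι
  obtain ⟨e, he⟩ := exists_injective_nat κ
  let t (k : κ) : ℝ := e k + 2
  have one_lt_t (k : κ) : 1 < t k := by linarith [(e k).cast_nonneg (α := ℝ)]
  have t_pos (k : κ) : 0 < t k := one_pos.trans (one_lt_t k)
  have t_injective : Function.Injective t :=
    (add_left_injective 2).comp (Nat.cast_injective.comp he)
  refine ⟨fun k => planePoint i j (-(t k)⁻¹) (-t k), 2, fun k => planePoint i j (t k) (t k)⁻¹,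
    planePoint i j 1 1⁻¹, 0, fun k => ?_, fun k => ?_, fun k l => ?_⟩
  · exact (tangent_hyperbola_neg_iff hij one_pos (t_pos k)).2 (one_lt_t k).ne
  · rw [dotProduct_zero, zero_add]
    exact zero_le_two
  · exact (tangent_hyperbola_neg_iff hij (t_pos l) (t_pos k)).trans t_injective.ne_iff

end Hyperbola

lemma exists_shattered_domains {𝒴 : Type*} [Fintype 𝒴] [Nonempty 𝒴] [MeasurableSpace 𝒴]
    {ι : Type*} [Fintype ι] [Nontrivial ι] {κ : Type*} [Finite κ]
    {γ : ℝ} (hγ : γ ∈ Set.Ioc (0 : ℝ) 1) :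
    ∃ P : κ → Measure ((ι → ℝ) × 𝒴), (∀ k, IsProbabilityMeasure (P k)) ∧
      (∀ k y, 0 < P k {p | p.2 = y}) ∧
      ShattersFamily (fun h : (𝒴 → ι → ℝ) × (𝒴 → ℝ) => recallLoss (linearPredictor h.1 h.2))
        γ P := by
  obtain ⟨w, β, z, a, b, ha, hb, hz⟩ := exists_halfspaces_isolating_points (ι := ι) (κ := Set κ)
  obtain ⟨μ, hμ, hμγ⟩ := exists_marginals_of_isolated_points
    (fun S => measurableSet_dotProduct_add_neg (w S) β) ha (fun S => (hb S).not_gt) hz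
    (θ := ⟨γ, hγ.1.le, hγ.2⟩) hγ.1
  obtain ⟨ν, hν, hνpos⟩ := exists_isProbabilityMeasure_singleton_pos 𝒴
  refine ⟨fun k => (μ k).prod ν, fun k => inferInstance, fun k y => ?_, fun S => ?_⟩
  · change 0 < (μ k).prod ν (Prod.snd ⁻¹' {y})
    rw [← Set.univ_prod, Measure.prod_prod, measure_univ, one_mul]
    exact hνpos y
  · refine ⟨(fun _ => w S, fun _ => β), fun k => ?_⟩
    simpa only [recallLoss_linearPredictor_const_prod (μ k) hνpos] using hμγ S k

theorem linear_highdim_shatter_general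
    {𝒴 : Type*} [Fintype 𝒴] [Nonempty 𝒴] [MeasurableSpace 𝒴]
    {ι : Type*} [Fintype ι] [Nontrivial ι]
    {γ : ℝ} (hγ : γ ∈ Set.Ioc (0 : ℝ) 1) (m : ℕ) :
    ∃ C : Finset (Measure ((ι → ℝ) × 𝒴)),
      C.card = m ∧
      (∀ P ∈ C, IsProbabilityMeasure P) ∧
      (∀ P ∈ C, ∀ y : 𝒴, 0 < P {p : (ι → ℝ) × 𝒴 | p.2 = y}) ∧
      (∀ C' : Finset (Measure ((ι → ℝ) × 𝒴)), C' ⊆ C →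
        ∃ w : 𝒴 → (ι → ℝ), ∃ b : 𝒴 → ℝ,
          (∀ P ∈ C', γ ≤ recallLoss (linearPredictor w b) P) ∧
          (∀ P ∈ C, P ∉ C' → recallLoss (linearPredictor w b) P < γ)) := by
  obtain ⟨P, hprob, hpos, hP⟩ :=
    exists_shattered_domains (𝒴 := 𝒴) (ι := ι) (κ := Fin m) hγ
  refine ⟨Finset.univ.map ⟨P, hP.injective⟩, by simp, by simpa using hprob, by simpa using hpos,
    fun C' hC' => ?_⟩
  obtain ⟨⟨w, b⟩, hwb⟩ := hP (P ⁻¹' C')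
  refine ⟨w, b, fun Q hQ => ?_, fun Q hQ hQ' => ?_⟩
  · obtain ⟨i, -, rfl⟩ := Finset.mem_map.1 (hC' hQ)
    exact (hwb i).2 hQ
  · obtain ⟨i, -, rfl⟩ := Finset.mem_map.1 hQ
    exact lt_of_not_ge fun h => hQ' ((hwb i).1 h)

/-- For `d ≥ 2`, the class of linear set-valued predictors on `ℝ^d`
(`h_y(x) = 𝟙[⟨w_y, x⟩ + b_y ≥ 0]`) shatters, for every `γ ∈ (0,1)` and every `m`, some set of
`m` domains with respect to the recall loss and `γ`; in particular
`VCdim_{L_recall,γ}(H) = ∞`. -/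
theorem linear_highdim_shatter
    {𝒴 : Type*} [Fintype 𝒴] [Nonempty 𝒴] [MeasurableSpace 𝒴]
    (d : ℕ) (hd : 2 ≤ d)
    (γ : ℝ) (hγ : γ ∈ Set.Ioo (0 : ℝ) 1) (m : ℕ) :
    ∃ C : Finset (Measure ((Fin d → ℝ) × 𝒴)),
      C.card = m ∧
      (∀ P ∈ C, IsProbabilityMeasure P) ∧
      (∀ P ∈ C, ∀ y : 𝒴, 0 < P {p : (Fin d → ℝ) × 𝒴 | p.2 = y}) ∧
      -- `C` is shattered by the linear class w.r.t. `L_recall`, `γ`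
      (∀ C' : Finset (Measure ((Fin d → ℝ) × 𝒴)), C' ⊆ C →
        ∃ w : 𝒴 → (Fin d → ℝ), ∃ b : 𝒴 → ℝ,
          (∀ P ∈ C',
            γ ≤ recallLoss (fun x : Fin d → ℝ => {y : 𝒴 | 0 ≤ w y ⬝ᵥ x + b y}) P) ∧
          (∀ P ∈ C, P ∉ C' →
            recallLoss (fun x : Fin d → ℝ => {y : 𝒴 | 0 ≤ w y ⬝ᵥ x + b y}) P < γ)) := by
  have : Nontrivial (Fin d) := Fin.nontrivial_iff_two_le.2 hd
  exact linear_highdim_shatter_general (Ioo_subset_Ioc_self hγ) m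
end

section
/- Fix d ≥ 1, a positive-definite matrix Σ ∈ ℝ^{d×d}, a label y, and γ ∈ (0,1). Consider domains e on ℝ^d × 𝒴 whose conditional distribution of X given Y = y under P_e is N(μ_e, σ_e·Σ) with μ_e ∈ ℝ^d and σ_e > 0. Let H be the class of homogeneous linear binary classifiers h_θ(x) = 𝟙[⟨θ, x⟩ ≥ 0] with θ ∈ ℝ^d ∖ {0}, and define the loss L_y(h, e) = P_e(h(X) = 0 | Y = y). Then H cannot shatter, with respect to L_y and γ, any set of d + 2 such domains: for any domains e_1, …, e_{d+2} of this form, there exists a pattern b ∈ {0,1}^{d+2} such that no θ ∈ ℝ^d ∖ {0} satisfies, for every i, P_{e_i}(⟨θ, X⟩ ≥ 0 | Y = y) ≥ 1−γ if and only if b_i = 1. -/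
open MeasureTheory ProbabilityTheory Matrix Set
open scoped ENNReal NNReal

/-- The multivariate Gaussian measure `N(μ, S)` on `ℝ^d` (for `S` positive-definite), defined by
its density with respect to Lebesgue measure. -/
noncomputable def mvGaussian {d : ℕ} (μ : Fin d → ℝ) (S : Matrix (Fin d) (Fin d) ℝ) :
    Measure (Fin d → ℝ) :=
  MeasureTheory.volume.withDensity fun x =>
    ENNReal.ofReal ((Real.sqrt ((2 * Real.pi) ^ d * S.det))⁻¹ *
      Real.exp (-((x - μ) ⬝ᵥ (S⁻¹ *ᵥ (x - μ))) / 2))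

/-!
A location-scale family `m i + r i • Z` satisfies `0 ≤ θ (m i + r i • Z)` iff
`0 ≤ θ ((r i)⁻¹ • m i) + θ Z`, so `P i (0 ≤ θ X)` is a monotone function of the single number
`θ (v i)`, where `v i = (r i)⁻¹ • m i`. Hence the domains covered by `θ` are those with `v i` in a
half-space. More than `dim V + 1` points `v i` are affinely dependent, and the two parts of a Radon
partition cannot be separated by a half-space. Gaussians whose covariances are proportional form
such a family, with `Z ∼ N(0, Σ)` and `r i = √(σ i)`.
-/

section Radon

variable {𝕜 E ι : Type*} [Field 𝕜] [LinearOrder 𝕜] [IsStrictOrderedRing 𝕜]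
  [AddCommGroup E] [Module 𝕜 E] {v : ι → E}

theorem exists_forall_convex_compl_not_forall_mem_iff (hv : ¬AffineIndependent 𝕜 v) :
    ∃ I : Set ι, ∀ s : Set E, Convex 𝕜 s → Convex 𝕜 sᶜ → ¬∀ i, v i ∈ s ↔ i ∈ I := by
  obtain ⟨I, p, hpI, hpIc⟩ := Convex.radon_partition hv
  refine ⟨I, fun s hs hsc h ↦ ?_⟩
  have hI : v '' I ⊆ s := image_subset_iff.2 fun i ↦ (h i).2
  have hIc : v '' Iᶜ ⊆ sᶜ := image_subset_iff.2 fun i ↦ mt (h i).1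
  exact convexHull_min hIc hsc hpIc (convexHull_min hI hs hpI)

theorem exists_forall_isUpperSet_not_forall_mem_iff (hv : ¬AffineIndependent 𝕜 v) :
    ∃ I : Set ι, ∀ (f : E →ₗ[𝕜] 𝕜) (U : Set 𝕜), IsUpperSet U → ¬∀ i, f (v i) ∈ U ↔ i ∈ I :=
  (exists_forall_convex_compl_not_forall_mem_iff hv).imp fun _ hI f _ hU ↦
    hI _ (hU.ordConnected.convex.linear_preimage f) (hU.compl.ordConnected.convex.linear_preimage f)

end Radon

theorem not_affineIndependent_of_finrank_add_one_lt_card {𝕜 E ι : Type*} [DivisionRing 𝕜]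
    [AddCommGroup E] [Module 𝕜 E] [FiniteDimensional 𝕜 E] [Fintype ι] (v : ι → E)
    (h : Module.finrank 𝕜 E + 1 < Fintype.card ι) : ¬AffineIndependent 𝕜 v := fun hv ↦
  h.not_ge <| hv.card_le_finrank_succ.trans <| Nat.succ_le_succ (Submodule.finrank_le _)

section LocationScale

variable {V Ω : Type*} [MeasurableSpace V] [AddCommGroup V] [Module ℝ V] [MeasurableSpace Ω]

theorem isUpperSet_setOf_le_measureReal_nonneg_add (ν : Measure Ω) [IsFiniteMeasure ν]
    (Z : Ω → ℝ) (c : ℝ) : IsUpperSet {t : ℝ | c ≤ ν.real {ω | 0 ≤ t + Z ω}} :=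
  fun _ _ hst hs ↦ hs.trans <| measureReal_mono fun _ hz ↦
    le_trans hz (add_le_add_left hst _)

theorem measureReal_nonneg_eq_of_hasLaw_map_add_smul [MeasurableAdd V] [MeasurableConstSMul ℝ V]
    {P : Measure Ω} {X : Ω → V} {ν : Measure V} {m : V} {r : ℝ} (hr : 0 < r)
    (hX : HasLaw X (ν.map fun z ↦ m + r • z) P) {θ : V →ₗ[ℝ] ℝ} (hθ : Measurable θ) :
    P.real {ω | 0 ≤ θ (X ω)} = ν.real {z | 0 ≤ θ (r⁻¹ • m) + θ z} := by
  have hH : MeasurableSet {x | 0 ≤ θ x} := measurableSet_le measurable_const hθ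
  have hpre : (fun z ↦ m + r • z) ⁻¹' {x | 0 ≤ θ x} = {z | 0 ≤ θ (r⁻¹ • m) + θ z} := by
    ext z
    have hfactor : θ (m + r • z) = r * (θ (r⁻¹ • m) + θ z) := by
      simp only [map_add, map_smul, smul_eq_mul]
      field_simp
    simp only [mem_preimage, mem_ofPred_eq, hfactor, mul_nonneg_iff_of_pos_left hr]
  calc P.real {ω | 0 ≤ θ (X ω)}
      = (P.map X).real {x | 0 ≤ θ x} :=
        (map_measureReal_apply_of_aemeasurable hX.aemeasurable hH).symm
    _ = ν.real {z | 0 ≤ θ (r⁻¹ • m) + θ z} := by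
      rw [hX.map_eq, map_measureReal_apply (by fun_prop) hH, hpre]

end LocationScale

theorem map_withDensity_comp {α β : Type*} [MeasurableSpace α] [MeasurableSpace β]
    (μ : Measure α) {T : α → β} (hT : Measurable T) {f : β → ℝ≥0∞} (hf : Measurable f) :
    (μ.withDensity (f ∘ T)).map T = (μ.map T).withDensity f := by
  ext s hs
  rw [Measure.map_apply hT hs, withDensity_apply _ (hT hs), withDensity_apply _ hs,
    setLIntegral_map hs hf hT]
  rfl

theorem map_add_smul_abs_pow_smul_addHaar {E : Type*} [NormedAddCommGroup E] [NormedSpace ℝ E]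
    [MeasurableSpace E] [BorelSpace E] [FiniteDimensional ℝ E] (μ : Measure E) [μ.IsAddHaarMeasure]
    (a : E) {r : ℝ} (hr : r ≠ 0) :
    (ENNReal.ofReal |r ^ Module.finrank ℝ E| • μ).map (fun x ↦ a + r • x) = μ := by
  have hcomp : (fun x ↦ a + r • x) = (a + ·) ∘ (r • ·) := rfl
  have hcancel : |r ^ Module.finrank ℝ E| * |(r ^ Module.finrank ℝ E)⁻¹| = 1 := by
    rw [← abs_mul, mul_inv_cancel₀ (pow_ne_zero _ hr), abs_one]
  rw [hcomp, ← Measure.map_map (by fun_prop) (by fun_prop), Measure.map_smul,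
    Measure.map_addHaar_smul μ hr, smul_smul, ← ENNReal.ofReal_mul (abs_nonneg _), hcancel,
    ENNReal.ofReal_one, one_smul, map_add_left_eq_self]

theorem sqrt_mul_det_sq_smul {n : Type*} [Fintype n] [DecidableEq n] (c r : ℝ)
    (S : Matrix n n ℝ) :
    √(c * (r ^ 2 • S).det) = |r ^ Fintype.card n| * √(c * S.det) := by
  rw [det_smul, ← Real.sqrt_sq_eq_abs, ← Real.sqrt_mul (sq_nonneg _)]
  ring_nf

theorem smul_dotProduct_inv_sq_smul_mulVec_smul {n K : Type*} [Fintype n] [DecidableEq n]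
    [Field K] {S : Matrix n n K} (hS : IsUnit S.det) {r : K} (hr : r ≠ 0) (z : n → K) :
    (r • z) ⬝ᵥ ((r ^ 2 • S)⁻¹ *ᵥ (r • z)) = z ⬝ᵥ (S⁻¹ *ᵥ z) := by
  have hinv : (r ^ 2 • S)⁻¹ = (r ^ 2)⁻¹ • S⁻¹ :=
    inv_smul' S (Units.mk0 (r ^ 2) (pow_ne_zero 2 hr)) hS
  rw [hinv, smul_mulVec, mulVec_smul, smul_dotProduct, dotProduct_smul, dotProduct_smul]
  simp only [smul_eq_mul]
  field_simp

section Gaussian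

variable {d : ℕ}

/-- The density of `N(μ, S)` with respect to Lebesgue measure, so that
`mvGaussian μ S = volume.withDensity fun x => ENNReal.ofReal (mvGaussianPDFReal μ S x)` holds by
`rfl`. It is named so that its behaviour under affine changes of variable can be stated. -/
noncomputable def mvGaussianPDFReal (μ : Fin d → ℝ) (S : Matrix (Fin d) (Fin d) ℝ)
    (x : Fin d → ℝ) : ℝ :=
  (Real.sqrt ((2 * Real.pi) ^ d * S.det))⁻¹ * Real.exp (-((x - μ) ⬝ᵥ (S⁻¹ *ᵥ (x - μ))) / 2)

theorem continuous_mvGaussianPDFReal (μ : Fin d → ℝ) (S : Matrix (Fin d) (Fin d) ℝ) :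
    Continuous (mvGaussianPDFReal μ S) := by
  unfold mvGaussianPDFReal
  fun_prop

theorem abs_pow_mul_mvGaussianPDFReal_add_smul (m : Fin d → ℝ) {S : Matrix (Fin d) (Fin d) ℝ}
    (hS : IsUnit S.det) {r : ℝ} (hr : r ≠ 0) (z : Fin d → ℝ) :
    |r ^ d| * mvGaussianPDFReal m (r ^ 2 • S) (m + r • z) = mvGaussianPDFReal 0 S z := by
  have hrd : |r ^ d| ≠ 0 := abs_ne_zero.2 (pow_ne_zero d hr)
  rw [mvGaussianPDFReal, mvGaussianPDFReal, sqrt_mul_det_sq_smul, Fintype.card_fin,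
    add_sub_cancel_left, sub_zero, smul_dotProduct_inv_sq_smul_mulVec_smul hS hr, mul_inv,
    mul_assoc, mul_inv_cancel_left₀ hrd]

theorem map_add_smul_mvGaussian_zero (m : Fin d → ℝ) {S : Matrix (Fin d) (Fin d) ℝ}
    (hS : IsUnit S.det) {r : ℝ} (hr : r ≠ 0) :
    (mvGaussian 0 S).map (fun z ↦ m + r • z) = mvGaussian m (r ^ 2 • S) := by
  let f : (Fin d → ℝ) → ℝ≥0∞ := fun x ↦ ENNReal.ofReal (mvGaussianPDFReal m (r ^ 2 • S) x)
  let k : ℝ≥0∞ := ENNReal.ofReal |r ^ d|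
  let T : (Fin d → ℝ) → Fin d → ℝ := fun z ↦ m + r • z
  have hf : Measurable f := (continuous_mvGaussianPDFReal m _).measurable.ennreal_ofReal
  have hT : Measurable T := by fun_prop
  have hdensity : mvGaussian 0 S = (k • volume).withDensity (f ∘ T) := by
    rw [withDensity_smul_measure, ← withDensity_smul k (hf.comp hT)]
    refine congrArg volume.withDensity (funext fun z ↦ ?_)
    change ENNReal.ofReal (mvGaussianPDFReal 0 S z) = k * f (T z)
    rw [← ENNReal.ofReal_mul (abs_nonneg _), abs_pow_mul_mvGaussianPDFReal_add_smul m hS hr]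
  have hvolume : (k • volume).map T = volume := by
    simpa only [Module.finrank_fin_fun] using
      map_add_smul_abs_pow_smul_addHaar (volume : Measure (Fin d → ℝ)) m hr
  calc (mvGaussian 0 S).map T
      = ((k • volume).map T).withDensity f := by rw [hdensity, map_withDensity_comp _ hT hf]
    _ = mvGaussian m (r ^ 2 • S) := by rw [hvolume]; rfl

theorem map_add_sqrt_smul_mvGaussian_zero (m : Fin d → ℝ) {S : Matrix (Fin d) (Fin d) ℝ}
    (hS : IsUnit S.det) {s : ℝ} (hs : 0 < s) :
    (mvGaussian 0 S).map (fun z ↦ m + √s • z) = mvGaussian m (s • S) := by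
  rw [map_add_smul_mvGaussian_zero m hS (Real.sqrt_ne_zero'.2 hs), Real.sq_sqrt hs.le]

end Gaussian

theorem homogeneous_linear_cannot_shatter_gaussian_general {V Ω ι : Type*}
    [NormedAddCommGroup V] [NormedSpace ℝ V] [FiniteDimensional ℝ V] [MeasurableSpace V]
    [BorelSpace V] [MeasurableSpace Ω] [Fintype ι] (hι : Module.finrank ℝ V + 1 < Fintype.card ι)
    (P : ι → Measure Ω) [∀ i, IsFiniteMeasure (P i)] (X : Ω → V) (ν : Measure V)
    (m : ι → V) (r : ι → ℝ) (hr : ∀ i, 0 < r i)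
    (hX : ∀ i, HasLaw X (ν.map fun z ↦ m i + r i • z) (P i)) (c : ℝ) :
    ∃ b : ι → Bool, ¬∃ θ : V →ₗ[ℝ] ℝ, ∀ i, c ≤ (P i).real {ω | 0 ≤ θ (X ω)} ↔ b i = true := by
  classical
  obtain ⟨i₀⟩ : Nonempty ι := Fintype.card_pos_iff.1 (by lia)
  have : IsFiniteMeasure (ν.map fun z ↦ m i₀ + r i₀ • z) := (hX i₀).map_eq ▸ inferInstance
  have : IsFiniteMeasure ν := Measure.isFiniteMeasure_of_map (f := fun z ↦ m i₀ + r i₀ • z)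
    (by fun_prop)
  obtain ⟨I, hI⟩ := exists_forall_isUpperSet_not_forall_mem_iff
    (not_affineIndependent_of_finrank_add_one_lt_card (fun i ↦ (r i)⁻¹ • m i) hι)
  refine ⟨fun i ↦ decide (i ∈ I), fun ⟨θ, hθ⟩ ↦
    hI θ _ (isUpperSet_setOf_le_measureReal_nonneg_add ν θ c) fun i ↦ ?_⟩
  have hθm : Measurable θ := θ.continuous_of_finiteDimensional.measurable
  rw [mem_ofPred_eq, ← measureReal_nonneg_eq_of_hasLaw_map_add_smul (hr i) (hX i) hθm, hθ i,
    decide_eq_true_iff]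

/-- Fix `d ≥ 1`, a positive-definite `Σ`, a label `y` and `γ ∈ (0,1)`.
For domains on `ℝ^d × 𝒴` whose conditional of `X` given `Y = y` is `N(μ_e, σ_e·Σ)`, the class of
homogeneous linear binary classifiers `h_θ(x) = 𝟙[⟨θ,x⟩ ≥ 0]` cannot shatter any `d + 2` such
domains with respect to `L_y(h,e) = P_e(h(X) = 0 | Y = y)` and `γ`: some coverage pattern
`b ∈ {0,1}^{d+2}` is realized by no `θ ≠ 0`. -/
theorem homogeneous_linear_cannot_shatter_gaussian
    {𝒴 : Type*} [Fintype 𝒴] [Nonempty 𝒴] [MeasurableSpace 𝒴]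
    (d : ℕ) (hd : 1 ≤ d)
    (Sig : Matrix (Fin d) (Fin d) ℝ) (hSig : Sig.PosDef)
    (y : 𝒴) (γ : ℝ) (hγ : γ ∈ Set.Ioo (0 : ℝ) 1)
    (e : Fin (d + 2) → Measure ((Fin d → ℝ) × 𝒴))
    (hprob : ∀ i, IsProbabilityMeasure (e i))
    (hpos : ∀ i, 0 < (e i) {p : (Fin d → ℝ) × 𝒴 | p.2 = y})
    (μ : Fin (d + 2) → (Fin d → ℝ)) (σ : Fin (d + 2) → ℝ) (hσ : ∀ i, 0 < σ i)
    -- each domain's conditional distribution of `X` given `Y = y` is `N(μ_i, σ_i·Σ)`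
    (hgauss : ∀ i, ((e i)[|{p : (Fin d → ℝ) × 𝒴 | p.2 = y}]).map Prod.fst =
      mvGaussian (μ i) (σ i • Sig)) :
    ∃ b : Fin (d + 2) → Bool,
      ¬ ∃ θ : Fin d → ℝ, θ ≠ 0 ∧ ∀ i : Fin (d + 2),
        (1 - γ ≤ (((e i)[|{p : (Fin d → ℝ) × 𝒴 | p.2 = y}])
            {p : (Fin d → ℝ) × 𝒴 | 0 ≤ θ ⬝ᵥ p.1}).toReal ↔ b i = true) :=
  (homogeneous_linear_cannot_shatter_gaussian_general (by simp) _ Prod.fst _ μ _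
    (fun i ↦ Real.sqrt_pos.2 (hσ i)) (fun i ↦ ⟨measurable_fst.aemeasurable, (hgauss i).trans
      (map_add_sqrt_smul_mvGaussian_zero (μ i) hSig.det_pos.ne'.isUnit (hσ i)).symm⟩) (1 - γ)).imp
    fun _ hb ⟨θ, _, hθ⟩ ↦ hb ⟨dotProductEquiv ℝ (Fin d) θ, hθ⟩
end
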